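/- Let F be a standard set-valued map and Φ the induced set-valued dynamical system. Let X : ℝ₊ → ℝ^m be a bounded asymptotic pseudotrajectory of Φ and let A be an attractor for Φ with basin of attraction B(A). If the limit set L(X) = ⋂_{t≥0} closure{X(s) : s ≥ t} intersects B(A), then L(X) ⊂ A. -/

import Mathlib

open MeasureTheory Filter Topology Metric Set Pointwise

noncomputable section

/-- `ℝ^m` with the Euclidean norm. -/
abbrev Euc (m : ℕ) := EuclideanSpace ℝ (Fin m)

/-- A standard set-valued map `F : ℝ^m ⇒ ℝ^m`: nonempty compact convex values,
closed graph, and linear growth. -/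
def IsStandardSVM {m : ℕ} (F : Euc m → Set (Euc m)) : Prop :=
  (∀ x, (F x).Nonempty ∧ IsCompact (F x) ∧ Convex ℝ (F x)) ∧
  IsClosed {p : Euc m × Euc m | p.2 ∈ F p.1} ∧
  ∃ c > 0, ∀ x, ∀ z ∈ F x, ‖z‖ ≤ c * (1 + ‖x‖)

/-- A solution of the differential inclusion `dx/dt ∈ F x`: an absolutely continuous
curve `z : ℝ → ℝ^m` (written as the integral of a locally integrable derivative `h`)
with `h t ∈ F (z t)` for almost every `t`. -/
def IsSolution {m : ℕ} (F : Euc m → Set (Euc m)) (z : ℝ → Euc m) : Prop :=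
  Continuous z ∧ ∃ h : ℝ → Euc m,
    (∀ a b : ℝ, IntervalIntegrable h volume a b) ∧
    (∀ᵐ t ∂volume, h t ∈ F (z t)) ∧
    ∀ t : ℝ, z t = z 0 + ∫ u in (0:ℝ)..t, h u

/-- `Φ_t(x)`: the set of points reached at time `t` by solutions starting at `x`. -/
def PhiT {m : ℕ} (F : Euc m → Set (Euc m)) (t : ℝ) (x : Euc m) : Set (Euc m) :=
  {y | ∃ z : ℝ → Euc m, IsSolution F z ∧ z 0 = x ∧ z t = y}

/-- `ω_Φ(x) = ⋂_{t ≥ 0} closure (Φ_{[t,∞)}(x))`. -/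
def omegaLimitSV {m : ℕ} (F : Euc m → Set (Euc m)) (x : Euc m) : Set (Euc m) :=
  ⋂ t ∈ Ici (0:ℝ), closure {y | ∃ s ≥ t, y ∈ PhiT F s x}

/-- An attractor for the set-valued dynamical system induced by `F`: a nonempty,
compact, invariant set admitting a neighborhood `U` with `Φ_t(U) ⊆ N^ε(A)` for all
`t` large enough. -/
def IsAttractorSV {m : ℕ} (F : Euc m → Set (Euc m)) (A : Set (Euc m)) : Prop :=
  A.Nonempty ∧ IsCompact A ∧
  (∀ x ∈ A, ∃ z : ℝ → Euc m, IsSolution F z ∧ z 0 = x ∧ Set.range z ⊆ A) ∧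
  ∃ U : Set (Euc m), IsOpen U ∧ A ⊆ U ∧
    ∀ ε > 0, ∃ tε > 0, ∀ t ≥ tε, ∀ x ∈ U, PhiT F t x ⊆ Metric.thickening ε A

/-- The basin of attraction `B(A) = {x | ω_Φ(x) ⊆ A}`. -/
def basinSV {m : ℕ} (F : Euc m → Set (Euc m)) (A : Set (Euc m)) : Set (Euc m) :=
  {x | omegaLimitSV F x ⊆ A}

/-- The limit set `L(X) = ⋂_{t ≥ 0} closure {X s : s ≥ t}` of a path. -/
def limitSet {m : ℕ} (X : ℝ → Euc m) : Set (Euc m) :=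
  ⋂ t ∈ Ici (0:ℝ), closure {y | ∃ s ≥ t, X s = y}

/-- `inf_{z ∈ S_Φ} sup_{u ∈ [0,T]} ‖z u - Y u‖`. -/
def distToSol {m : ℕ} (F : Euc m → Set (Euc m)) (Y : ℝ → Euc m) (T : ℝ) : ℝ :=
  sInf {d | ∃ z : ℝ → Euc m, IsSolution F z ∧ d = ⨆ u : Icc (0:ℝ) T, ‖z u - Y u‖}

/-- Asymptotic pseudotrajectory of the set-valued dynamical system induced by `F`. -/
def IsAPT {m : ℕ} (F : Euc m → Set (Euc m)) (X : ℝ → Euc m) : Prop :=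
  ∀ T > 0, Tendsto (fun t => distToSol F (fun u => X (t + u)) T) atTop (𝓝 0)

/-- A point `p` is attainable by the process `X`: for every `t > 0` and every
neighborhood `U` of `p`, `P(∃ s ≥ t, X s ∈ U) > 0`. -/
def Attainable {m : ℕ} {Ω : Type*} [MeasurableSpace Ω] (μ : Measure Ω)
    (X : ℝ → Ω → Euc m) (p : Euc m) : Prop :=
  ∀ t > 0, ∀ U ∈ 𝓝 p, 0 < μ {ω | ∃ s ≥ t, X s ω ∈ U}

/-- `τ_n = γ_1 + ⋯ + γ_n`. -/
def tauOf (γ : ℕ → ℝ) (n : ℕ) : ℝ := ∑ i ∈ Finset.range n, γ (i + 1)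

/-- `m(t) = sup {j | τ_j ≤ t}`. -/
def mIdx (γ : ℕ → ℝ) (t : ℝ) : ℕ := sSup {j | tauOf γ j ≤ t}

/-- Hypothesis H1: there is `w t α T` decreasing to `0` in `t` dominating the
conditional probability that `sup_{s ≥ t} inf_{z ∈ S_Φ} sup_{u ∈ [0,T]} ‖z u − X (s+u)‖ ≥ α`. -/
def HypH1 {m : ℕ} {Ω : Type*} [MeasurableSpace Ω] (μ : Measure Ω)
    (𝓕 : ℝ → MeasurableSpace Ω) (F : Euc m → Set (Euc m)) (X : ℝ → Ω → Euc m) : Prop :=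
  ∃ w : ℝ → ℝ → ℝ → ℝ,
    (∀ α > 0, ∀ T > 0, Antitone (fun t => w t α T) ∧ Tendsto (fun t => w t α T) atTop (𝓝 0)) ∧
    ∀ α > 0, ∀ T > 0, ∀ t : ℝ, ∀ᵐ ω ∂μ,
      (μ[Set.indicator {ω' | α ≤ ⨆ s : Ici t, distToSol F (fun u => X ((s : ℝ) + u) ω') T}
          (fun _ => (1:ℝ)) | 𝓕 t]) ω ≤ w t α T

/-- `F^δ(x) = {y | ∃ z ∈ B(x,δ), dist(y, F z) < δ}`, with the convention `F^0 = F`. -/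
def Fdelta {m : ℕ} (F : Euc m → Set (Euc m)) (δ : ℝ) (x : Euc m) : Set (Euc m) :=
  if δ = 0 then F x
  else {y | ∃ z : Euc m, dist z x < δ ∧ Metric.infDist y (F z) < δ}

/-- A `(δ(·), V(·))`-perturbed solution of `dx/dt ∈ F x`. -/
def IsPerturbedSolution {m : ℕ} (F : Euc m → Set (Euc m)) (δ : ℝ → ℝ) (V : ℝ → Euc m)
    (y : ℝ → Euc m) : Prop :=
  Continuous y ∧ (∀ t > 0, 0 < δ t) ∧ Antitone δ ∧ Tendsto δ atTop (𝓝 0) ∧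
  (∀ a b : ℝ, IntervalIntegrable V volume a b) ∧
  (∀ T > 0, Tendsto (fun t => ⨆ u : Icc (0:ℝ) T, ‖∫ r in t..(t + (u : ℝ)), V r‖)
    atTop (𝓝 0)) ∧
  ∃ h : ℝ → Euc m, (∀ a b : ℝ, IntervalIntegrable h volume a b) ∧
    (∀ᵐ t ∂(volume.restrict (Ioi (0:ℝ))), h t - V t ∈ Fdelta F (δ t) (y t)) ∧
    ∀ t ∈ Ici (0:ℝ), y t = y 0 + ∫ u in (0:ℝ)..t, h u

/-- `Δ(n,T) = sup_{n < k ≤ m(τ_n + T)} ‖∑_{i=n}^{k-1} γ_{i+1} U_{i+1}‖`. -/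
def DeltaNT {m : ℕ} {Ω : Type*} (γ : ℕ → ℝ) (U : ℕ → Ω → Euc m) (T : ℝ) (n : ℕ)
    (ω : Ω) : ℝ :=
  ⨆ k : {k : ℕ // n < k ∧ k ≤ mIdx γ (tauOf γ n + T)},
    ‖∑ i ∈ Finset.Ico n (k : ℕ), γ (i + 1) • U (i + 1) ω‖

/-- Condition (bruit2): the conditional probability that `sup_{m ≥ n} Δ(m,T) ≥ ε` is
dominated by some `w n ε T` decreasing to `0` in `n`. -/
def Bruit2 {m : ℕ} {Ω : Type*} [MeasurableSpace Ω] (μ : Measure Ω)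
    (𝓕 : ℕ → MeasurableSpace Ω) (γ : ℕ → ℝ) (U : ℕ → Ω → Euc m) : Prop :=
  ∃ w : ℕ → ℝ → ℝ → ℝ,
    (∀ ε > 0, ∀ T > 0, Antitone (fun n => w n ε T) ∧ Tendsto (fun n => w n ε T) atTop (𝓝 0)) ∧
    ∀ ε > 0, ∀ T > 0, ∀ n : ℕ, ∀ᵐ ω ∂μ,
      (μ[Set.indicator {ω' | ε ≤ ⨆ k : Ici n, DeltaNT γ U T (k : ℕ) ω'}
          (fun _ => (1:ℝ)) | 𝓕 n]) ω ≤ w n ε T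

/-- Topological `limsup` of a sequence of sets: points whose every neighborhood
meets infinitely many of the sets. -/
def setLimsup {X : Type*} [TopologicalSpace X] (A : ℕ → Set X) : Set X :=
  {y | ∀ U ∈ 𝓝 y, {n | (U ∩ A n).Nonempty}.Infinite}

/-- The operator `Λ^δ` on continuous paths `[0,T] → ℝ^m` (with `Λ^0 = Λ`). -/
def LambdaD {m : ℕ} (F : Euc m → Set (Euc m)) (T : ℝ) (hT : 0 ≤ T) (δ : ℝ)
    (z : C(Icc (0:ℝ) T, Euc m)) : Set C(Icc (0:ℝ) T, Euc m) :=
  {y | ∃ h : ℝ → Euc m, IntervalIntegrable h volume 0 T ∧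
    (∀ u : Icc (0:ℝ) T, h u ∈ Fdelta F δ (z u)) ∧
    ∀ τ : Icc (0:ℝ) T, y τ = z ⟨0, Set.left_mem_Icc.mpr hT⟩ + ∫ u in (0:ℝ)..(τ : ℝ), h u}

/-- `Φ^T(M) = closure (⋃_{s ∈ [0,T]} Φ_s(M))`. -/
def PhiTM {m : ℕ} (F : Euc m → Set (Euc m)) (T : ℝ) (M : Set (Euc m)) : Set (Euc m) :=
  closure (⋃ s ∈ Icc (0:ℝ) T, ⋃ x ∈ M, PhiT F s x)

/-- `‖F‖ = sup_{x ∈ Φ^T(M)} sup_{y ∈ F x} ‖y‖`. -/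
def normF {m : ℕ} (F : Euc m → Set (Euc m)) (T : ℝ) (M : Set (Euc m)) : ℝ :=
  sSup {r | ∃ x ∈ PhiTM F T M, ∃ y ∈ F x, r = ‖y‖}

/-- `K_C`: Lipschitz paths with constant `‖F‖ + C + 1` starting in `M`. -/
def KC {m : ℕ} (F : Euc m → Set (Euc m)) (T : ℝ) (hT : 0 ≤ T) (M : Set (Euc m))
    (C : ℝ) : Set C(Icc (0:ℝ) T, Euc m) :=
  {y | (∀ u v : Icc (0:ℝ) T, ‖y u - y v‖ ≤ (normF F T M + C + 1) * |(u : ℝ) - (v : ℝ)|) ∧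
    y ⟨0, Set.left_mem_Icc.mpr hT⟩ ∈ M}

/-- `S_{[0,T]}`: restrictions to `[0,T]` of solutions starting in `M`. -/
def SolRestrict {m : ℕ} (F : Euc m → Set (Euc m)) (T : ℝ) (M : Set (Euc m)) :
    Set C(Icc (0:ℝ) T, Euc m) :=
  {y | ∃ z : ℝ → Euc m, IsSolution F z ∧ z 0 ∈ M ∧ ∀ u : Icc (0:ℝ) T, y u = z u}

/-- A generalised stochastic approximation process relative to `F`. -/
def IsGSAP {m : ℕ} {Ω : Type*} [MeasurableSpace Ω] (μ : Measure Ω)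
    (F : Euc m → Set (Euc m)) (M : Set (Euc m)) (γ : ℕ → ℝ)
    (Fn : ℕ → Euc m → Set (Euc m)) (U : ℕ → Ω → Euc m) (x : ℕ → Ω → Euc m) : Prop :=
  (∀ n, 0 < γ n) ∧
  Tendsto (fun n => ∑ i ∈ Finset.range n, γ (i + 1)) atTop atTop ∧
  Tendsto γ atTop (𝓝 0) ∧
  (∃ C, ∀ n ω, ‖U n ω‖ ≤ C) ∧
  (∀ n ω, x (n + 1) ω - x n ω - γ (n + 1) • U (n + 1) ω ∈ γ (n + 1) • Fn n (x n ω)) ∧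
  (∀ T > 0, ∀ᵐ ω ∂μ, Tendsto
    (fun n => ⨆ k : {k : ℕ // ∑ i ∈ Finset.Ico n k, γ i ≤ T},
      ‖∑ i ∈ Finset.Ico n (k : ℕ), γ (i + 1) • U (i + 1) ω‖) atTop (𝓝 0)) ∧
  (∀ n ω, x n ω ∈ M) ∧
  (∀ δ > 0, ∃ n₀ : ℕ, ∀ n ≥ n₀, ∀ ω, Fn n (x n ω) ⊆ Fdelta F δ (x n ω))

theorem aux_incr {m : ℕ} {F : Euc m → Set (Euc m)} {y : ℝ → Euc m} (hy : IsSolution F y) :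
    ∃ h : ℝ → Euc m, (∀ a b : ℝ, IntervalIntegrable h volume a b) ∧
      (∀ᵐ t ∂volume, h t ∈ F (y t)) ∧ ∀ a b : ℝ, y b - y a = ∫ u in a..b, h u := by
  obtain ⟨_, h, h1, h2, h3⟩ := hy
  refine ⟨h, h1, h2, fun a b => ?_⟩
  rw [h3 a, h3 b, ← intervalIntegral.integral_interval_sub_left (h1 0 b) (h1 0 a)]
  abel

theorem aux_shift {m : ℕ} {F : Euc m → Set (Euc m)} {y : ℝ → Euc m} (hy : IsSolution F y)
    (r : ℝ) : IsSolution F (fun u => y (u + r)) := by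
  obtain ⟨h, h1, h2, h3⟩ := aux_incr hy
  refine ⟨hy.1.comp (continuous_id.add continuous_const), fun u => h (u + r), ?_, ?_, ?_⟩
  · intro a b
    have := (h1 (a + r) (b + r)).comp_add_right r
    simpa using this
  · exact (measurePreserving_add_right volume r).quasiMeasurePreserving.ae h2
  · intro t
    rw [intervalIntegral.integral_comp_add_right, ← h3]
    abel

theorem aux_lip {m : ℕ} {F : Euc m → Set (Euc m)} {c K : ℝ} (hc0 : 0 < c)
    (hc : ∀ x, ∀ z ∈ F x, ‖z‖ ≤ c * (1 + ‖x‖)) {y : ℝ → Euc m} (hy : IsSolution F y)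
    {a b : ℝ} (hK : ∀ u ∈ uIcc a b, ‖y u‖ ≤ K) : ‖y b - y a‖ ≤ c * (1 + K) * |b - a| := by
  obtain ⟨h, h1, h2, h3⟩ := aux_incr hy
  rw [h3]
  apply intervalIntegral.norm_integral_le_of_norm_le_const_ae
  filter_upwards [h2] with t ht hI
  refine (hc _ _ ht).trans ?_
  have := hK t (uIoc_subset_uIcc hI)
  gcongr

theorem aux_usc {m : ℕ} {F : Euc m → Set (Euc m)} (hF : IsStandardSVM F) (p : Euc m)
    {ε : ℝ} (hε : 0 < ε) :
    ∃ δ > 0, ∀ q, ‖q - p‖ < δ → F q ⊆ Metric.cthickening ε (F p) := by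
  obtain ⟨-, hcl, c, hc0, hc⟩ := hF
  by_contra! H
  choose q hq hq2 using fun n : ℕ => H (1 / ((n:ℝ) + 1)) (by positivity)
  have hq3 : ∀ n, ∃ w ∈ F (q n), w ∉ Metric.cthickening ε (F p) := fun n =>
    Set.not_subset.1 (hq2 n)
  choose w hw hw2 using hq3
  have hqt : Tendsto q atTop (𝓝 p) := by
    rw [tendsto_iff_norm_sub_tendsto_zero]
    exact squeeze_zero (fun _ => norm_nonneg _) (fun n => (hq n).le)
      tendsto_one_div_add_atTop_nhds_zero_nat
  have hb : ∀ n, w n ∈ closedBall (0 : Euc m) (c * (1 + (‖p‖ + 1))) := by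
    intro n
    rw [mem_closedBall_zero_iff]
    refine (hc _ _ (hw n)).trans ?_
    have h1 : ‖q n - p‖ ≤ 1 := (hq n).le.trans (by
      rw [div_le_one (by positivity)]; linarith [Nat.cast_nonneg (α := ℝ) n])
    have h2 : ‖q n‖ ≤ ‖p‖ + 1 := by
      have := norm_add_le (q n - p) p
      rw [sub_add_cancel] at this
      linarith
    gcongr
  obtain ⟨w0, -, φ, hφ, hlim⟩ := (isCompact_closedBall _ _).tendsto_subseq hb
  have hmem : w0 ∈ F p := by
    have := hcl.mem_of_tendsto ((hqt.comp hφ.tendsto_atTop).prodMk_nhds hlim)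
      (Eventually.of_forall fun n => hw (φ n))
    exact this
  have hnb : Metric.cthickening ε (F p) ∈ 𝓝 w0 :=
    Filter.mem_of_superset (Metric.isOpen_thickening.mem_nhds
      (Metric.self_subset_thickening hε _ hmem)) (Metric.thickening_subset_cthickening _ _)
  obtain ⟨n, hn⟩ := (hlim.eventually hnb).exists
  exact hw2 _ hn

theorem aux_window0 {m : ℕ} {F : Euc m → Set (Euc m)} {X : ℝ → Euc m} (hX : Continuous X)
    (hne : ∃ z, IsSolution F z) (hAPT : IsAPT F X) {T ε : ℝ} (hT : 0 < T) (hε : 0 < ε) :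
    ∀ᶠ t in atTop, ∃ y, IsSolution F y ∧ ∀ u ∈ Icc 0 T, ‖y u - X (t + u)‖ < ε := by
  filter_upwards [(hAPT T hT).eventually (gt_mem_nhds hε)] with t ht
  obtain ⟨z0, hz0⟩ := hne
  have hn : {d | ∃ z : ℝ → Euc m, IsSolution F z ∧
      d = ⨆ u : Icc (0:ℝ) T, ‖z u - X (t + u)‖}.Nonempty := ⟨_, z0, hz0, rfl⟩
  obtain ⟨d, ⟨y, hy, rfl⟩, hd⟩ := exists_lt_of_csInf_lt hn ht
  refine ⟨y, hy, fun u hu => lt_of_le_of_lt ?_ hd⟩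
  have hcont : Continuous (fun u : Icc (0:ℝ) T => ‖y u - X (t + u)‖) := by
    have := hy.1
    fun_prop
  exact le_ciSup (isCompact_range hcont).bddAbove (⟨u, hu⟩ : Icc (0:ℝ) T)

theorem aux_window {m : ℕ} {F : Euc m → Set (Euc m)} {X : ℝ → Euc m} (hX : Continuous X)
    (hne : ∃ z, IsSolution F z) (hAPT : IsAPT F X) {R ε : ℝ} (hR : 0 < R) (hε : 0 < ε) :
    ∀ᶠ t in atTop, ∃ y, IsSolution F y ∧ ∀ u ∈ Icc (-R) R, ‖y u - X (t + u)‖ < ε := by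
  have h := aux_window0 hX hne hAPT (T := 2 * R) (by positivity) hε
  have ht : Tendsto (fun t : ℝ => t - R) atTop atTop := tendsto_atTop_add_const_right _ _ tendsto_id
  filter_upwards [ht.eventually h] with t ⟨y, hy, hyu⟩
  refine ⟨_, aux_shift hy R, fun u hu => ?_⟩
  have := hyu (u + R) ⟨by linarith [hu.1], by linarith [hu.2]⟩
  convert this using 4
  ring

theorem aux_ftc {m : ℕ} {z : ℝ → Euc m} {L : NNReal} (hz : LipschitzWith L z) :
    (∀ a b : ℝ, IntervalIntegrable (deriv z) volume a b) ∧
      ∀ t : ℝ, z t = z 0 + ∫ u in (0:ℝ)..t, deriv z u := by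
  have hint : ∀ a b : ℝ, IntervalIntegrable (deriv z) volume a b := by
    intro a b
    refine (intervalIntegrable_const (c := (L:ℝ))).mono_fun
      (stronglyMeasurable_deriv z).aestronglyMeasurable ?_
    refine Eventually.of_forall fun t => ?_
    simpa using norm_deriv_le_of_lipschitz hz
  refine ⟨hint, fun t => ?_⟩
  ext i
  have hL : LipschitzWith _ (fun u => z u i) := (EuclideanSpace.proj (𝕜 := ℝ) i).lipschitz.comp hz
  have h1 := (hL.lipschitzOnWith (s := uIcc 0 t)).absolutelyContinuousOnInterval.integral_deriv_eq_sub
  have h2 : (∫ u in (0:ℝ)..t, deriv z u) i = ∫ u in (0:ℝ)..t, (deriv z u) i :=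
    ((EuclideanSpace.proj (𝕜 := ℝ) i : Euc m →L[ℝ] ℝ).intervalIntegral_comp_comm (hint 0 t)).symm
  have h3 : ∫ u in (0:ℝ)..t, (deriv z u) i = ∫ u in (0:ℝ)..t, deriv (fun u => z u i) u := by
    apply intervalIntegral.integral_congr_ae
    filter_upwards [hz.ae_differentiableAt_real] with u hu _
    exact (((EuclideanSpace.proj (𝕜 := ℝ) i : Euc m →L[ℝ] ℝ).hasFDerivAt.comp_hasDerivAt u
      hu.hasDerivAt).deriv).symm
  rw [PiLp.add_apply, h2, h3, h1]
  ring

theorem aux_quot {m : ℕ} {F : Euc m → Set (Euc m)} {y : ℝ → Euc m} (hy : IsSolution F y)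
    {S : Set (Euc m)} (hS : Convex ℝ S) (hSc : IsClosed S) {t k : ℝ} (hk : 0 < k)
    (hyS : ∀ u ∈ Ioc t (t + k), F (y u) ⊆ S) : k⁻¹ • (y (t + k) - y t) ∈ S := by
  obtain ⟨h, h1, h2, h3⟩ := aux_incr hy
  rw [h3]
  have := hS.set_average_mem (μ := volume) (t := Ioc t (t + k)) (f := h) hSc
    (by simp [hk]) (by simp) (by
      rw [ae_restrict_iff' measurableSet_Ioc]
      filter_upwards [h2] with u hu hI using hyS u hI hu)
    ((intervalIntegrable_iff_integrableOn_Ioc_of_le (by linarith)).1 (h1 t (t + k)))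
  rw [setAverage_eq] at this
  rw [intervalIntegral.integral_of_le (by linarith)]
  simpa [measureReal_def, hk.le] using this

theorem aux_limit {m : ℕ} {F : Euc m → Set (Euc m)} (hF : IsStandardSVM F)
    {X : ℝ → Euc m} (hX : Continuous X) (hXb : Bornology.IsBounded (X '' Ici (0:ℝ)))
    (hne : ∃ z, IsSolution F z) (hAPT : IsAPT F X) (l : Ultrafilter ℝ) (hl : ↑l ≤ (atTop : Filter ℝ)) :
    ∃ z : ℝ → Euc m, IsSolution F z ∧ (∃ M, ∀ s, ‖z s‖ ≤ M) ∧
      ∀ s, Tendsto (fun t => X (t + s)) l (𝓝 (z s)) := by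
  obtain ⟨hval, -, c, hc0, hc⟩ := id hF
  obtain ⟨M, hM⟩ := hXb.exists_norm_le
  have hM' : ∀ t : ℝ, 0 ≤ t → ‖X t‖ ≤ M := fun t ht => hM _ ⟨t, ht, rfl⟩
  have hM0 : 0 ≤ M := (norm_nonneg _).trans (hM' 0 le_rfl)
  have hex : ∀ s : ℝ, ∃ w ∈ closedBall (0 : Euc m) M, Tendsto (fun t => X (t + s)) l (𝓝 w) := by
    intro s
    have := (isCompact_closedBall (0 : Euc m) M).ultrafilter_le_nhds (l.map fun t => X (t + s)) (by
      rw [Filter.le_principal_iff]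
      have : ∀ᶠ t in (l : Filter ℝ), -s ≤ t := hl (eventually_ge_atTop (-s))
      have h2 : ∀ᶠ t in (l : Filter ℝ), X (t + s) ∈ closedBall (0 : Euc m) M := by
        filter_upwards [this] with t ht
        exact mem_closedBall_zero_iff.2 (hM' _ (by linarith))
      exact h2)
    obtain ⟨w, hw, hw2⟩ := this
    exact ⟨w, hw, hw2⟩
  choose z hzM hz using hex
  have hzM' : ∀ s, ‖z s‖ ≤ M := fun s => mem_closedBall_zero_iff.1 (hzM s)
  set L : ℝ := c * (1 + (M + 1)) with hL
  have hL0 : 0 < L := by positivity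
  -- good windows
  have hwin : ∀ R > 0, ∀ η > 0, η ≤ 1 → ∀ᶠ t in (l : Filter ℝ), ∃ y, IsSolution F y ∧
      (∀ u ∈ Icc (-R) R, ‖y u - X (t + u)‖ < η) ∧
      ∀ a ∈ Icc (-R) R, ∀ b ∈ Icc (-R) R, ‖y b - y a‖ ≤ L * |b - a| := by
    intro R hR η hη hη1
    have h2 : ∀ᶠ t in (l : Filter ℝ), R ≤ t := hl (eventually_ge_atTop R)
    filter_upwards [hl (aux_window hX hne hAPT hR hη), h2] with t ⟨y, hy, hyu⟩ ht
    refine ⟨y, hy, hyu, fun a ha b hb => aux_lip hc0 hc hy fun u hu => ?_⟩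
    have huR : u ∈ Icc (-R) R := (convex_Icc _ _).ordConnected.uIcc_subset ha hb hu
    have h1 := hyu u huR
    have h3 := hM' (t + u) (by linarith [huR.1])
    have h4 := norm_add_le (y u - X (t + u)) (X (t + u))
    rw [sub_add_cancel] at h4
    linarith
  have hlip : ∀ a b : ℝ, ‖z b - z a‖ ≤ L * |b - a| := by
    intro a b
    refine le_of_forall_pos_le_add fun ε hε => ?_
    have hR : 0 < |a| + |b| + 1 := by positivity
    have ha : a ∈ Icc (-(|a| + |b| + 1)) (|a| + |b| + 1) :=
      ⟨by linarith [neg_abs_le a, abs_nonneg b], by linarith [le_abs_self a, abs_nonneg b]⟩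
    have hb : b ∈ Icc (-(|a| + |b| + 1)) (|a| + |b| + 1) :=
      ⟨by linarith [neg_abs_le b, abs_nonneg a], by linarith [le_abs_self b, abs_nonneg a]⟩
    have hη : 0 < min 1 (ε / 2) := by positivity
    refine le_of_tendsto ((hz b).sub (hz a)).norm ?_
    filter_upwards [hwin _ hR _ hη (min_le_left _ _)] with t ⟨y, hy, hyu, hyl⟩
    have h1 := (hyu a ha).trans_le (min_le_right _ _)
    have h2 := (hyu b hb).trans_le (min_le_right _ _)
    have h3 := hyl a ha b hb
    have h4 : X (t + b) - X (t + a) = (y b - y a) - (y b - X (t + b)) + (y a - X (t + a)) := by abel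
    rw [h4]
    have h5 := norm_add_le ((y b - y a) - (y b - X (t + b))) (y a - X (t + a))
    have h6 := norm_sub_le (y b - y a) (y b - X (t + b))
    linarith
  have hLW : LipschitzWith (Real.toNNReal L) z := by
    refine LipschitzWith.of_dist_le_mul fun a b => ?_
    rw [Real.coe_toNNReal _ hL0.le, dist_eq_norm, Real.dist_eq]
    exact hlip b a
  obtain ⟨hint, hftc⟩ := aux_ftc hLW
  refine ⟨z, ⟨hLW.continuous, deriv z, hint, ?_, hftc⟩, ⟨M, hzM'⟩, hz⟩
  filter_upwards [hLW.ae_differentiableAt_real] with t hdiff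
  obtain ⟨hFne, hFc, hFconv⟩ := hval (z t)
  rw [hFc.isClosed.mem_iff_infDist_zero hFne]
  refine le_antisymm (le_of_forall_pos_le_add fun ε hε => ?_) infDist_nonneg
  rw [zero_add]
  obtain ⟨δ, hδ, hus⟩ := aux_usc hF (z t) hε
  have hqt : Tendsto (fun k : ℝ => k⁻¹ • (z (t + k) - z t)) (𝓝[>] 0) (𝓝 (deriv z t)) :=
    hdiff.hasDerivAt.tendsto_slope_zero_right
  refine le_of_tendsto ((continuous_infDist_pt (F (z t))).continuousAt.tendsto.comp hqt) ?_
  have hk1 : ∀ᶠ k in 𝓝[>] (0:ℝ), k ∈ Ioo 0 (min 1 (δ / (2 * L))) :=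
    Ioo_mem_nhdsGT (by positivity)
  filter_upwards [hk1] with k hk
  obtain ⟨hk0, hk⟩ := hk
  have hk1 : k < 1 := hk.trans_le (min_le_left _ _)
  have hkL : L * k < δ / 2 := by
    have := hk.trans_le (min_le_right _ _)
    rw [lt_div_iff₀ (by positivity)] at this
    linarith
  simp only [Function.comp]
  refine le_of_forall_pos_le_add fun ε' hε' => ?_
  have hXq : Tendsto (fun τ => k⁻¹ • (X (τ + (t + k)) - X (τ + t))) l
      (𝓝 (k⁻¹ • (z (t + k) - z t))) := ((hz (t + k)).sub (hz t)).const_smul _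
  refine le_of_tendsto ((continuous_infDist_pt (F (z t))).continuousAt.tendsto.comp hXq) ?_
  have hη : 0 < min 1 (min (δ / 4) (k * ε' / 2)) := by positivity
  have hR : 0 < |t| + 1 := by positivity
  have hnear : ∀ᶠ τ in (l : Filter ℝ), ‖X (τ + t) - z t‖ < δ / 4 := by
    have := (tendsto_iff_norm_sub_tendsto_zero.1 (hz t)).eventually
      (gt_mem_nhds (show (0:ℝ) < δ / 4 by positivity))
    exact this
  filter_upwards [hwin _ hR _ hη (min_le_left _ _), hnear] with τ ⟨y, hy, hyu, hyl⟩ hτ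
  have hwt : ∀ u ∈ Icc t (t + k), u ∈ Icc (-(|t| + 1)) (|t| + 1) := fun u hu =>
    ⟨by linarith [neg_abs_le t, hu.1], by linarith [le_abs_self t, hu.2]⟩
  have ht1 := hwt t ⟨le_rfl, by linarith⟩
  have ht2 := hwt (t + k) ⟨by linarith, le_rfl⟩
  have hq := aux_quot hy (S := Metric.cthickening ε (F (z t))) (hFconv.cthickening ε)
    Metric.isClosed_cthickening (t := t) hk0 (by
      intro u hu
      apply hus
      have e1 := hyl t ht1 u (hwt u (Ioc_subset_Icc_self hu))
      have e2 := (hyu t ht1).trans_le ((min_le_right _ _).trans (min_le_left _ _))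
      have e3 : L * |u - t| ≤ L * k := by
        gcongr
        rw [abs_of_nonneg (by linarith [hu.1])]
        linarith [hu.2]
      have e4 : y u - z t = (y u - y t) + (y t - X (τ + t)) + (X (τ + t) - z t) := by abel
      rw [e4]
      have e5 := norm_add₃_le (a := y u - y t) (b := y t - X (τ + t)) (c := X (τ + t) - z t)
      linarith)
  have hq' : infDist (k⁻¹ • (y (t + k) - y t)) (F (z t)) ≤ ε :=
    ENNReal.toReal_le_of_le_ofReal hε.le (Metric.mem_cthickening_iff.1 hq)
  have f1 := (hyu t ht1).trans_le ((min_le_right _ _).trans (min_le_right _ _))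
  have f2 := (hyu (t + k) ht2).trans_le ((min_le_right _ _).trans (min_le_right _ _))
  have hd : dist (k⁻¹ • (X (τ + (t + k)) - X (τ + t))) (k⁻¹ • (y (t + k) - y t)) ≤ ε' := by
    rw [dist_comm, dist_eq_norm, ← smul_sub, norm_smul, norm_inv, Real.norm_of_nonneg hk0.le,
      inv_mul_le_iff₀ hk0]
    have g1 : y (t + k) - y t - (X (τ + (t + k)) - X (τ + t)) =
      (y (t + k) - X (τ + (t + k))) - (y t - X (τ + t)) := by abel
    rw [g1]
    have := norm_sub_le (y (t + k) - X (τ + (t + k))) (y t - X (τ + t))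
    linarith
  have := infDist_le_infDist_add_dist (s := F (z t)) (x := k⁻¹ • (X (τ + (t + k)) - X (τ + t)))
    (y := k⁻¹ • (y (t + k) - y t))
  simp only [Function.comp]
  linarith

theorem aux_cluster {m : ℕ} {X : ℝ → Euc m} {x : Euc m} :
    x ∈ limitSet X ↔ MapClusterPt x atTop X := by
  rw [mapClusterPt_iff_frequently]
  simp only [limitSet, mem_iInter, mem_closure_iff_nhds, mem_Ici]
  constructor
  · intro h s hs
    rw [frequently_atTop]
    intro a
    obtain ⟨_, hy, b, hb, rfl⟩ := h (max a 0) (le_max_right _ _) s hs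
    exact ⟨b, (le_max_left _ _).trans hb, hy⟩
  · intro h t _ s hs
    obtain ⟨b, hb, hy⟩ := frequently_atTop.1 (h s hs) t
    exact ⟨X b, hy, b, hb, rfl⟩

/-- If `X` is a bounded asymptotic pseudotrajectory of the set-valued
dynamical system induced by a standard `F` and `A` is an attractor whose basin meets
the limit set `L(X)`, then `L(X) ⊆ A`. -/
theorem limitSet_subset_attractor_of_APT
    {m : ℕ} (F : Euc m → Set (Euc m)) (hF : IsStandardSVM F)
    (X : ℝ → Euc m) (hXcont : Continuous X)
    (hXbdd : Bornology.IsBounded (X '' Ici (0:ℝ)))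
    (hAPT : IsAPT F X)
    (A : Set (Euc m)) (hA : IsAttractorSV F A)
    (hmeet : (limitSet X ∩ basinSV F A).Nonempty) :
    limitSet X ⊆ A := by
  obtain ⟨x, hxL, hxB⟩ := hmeet
  obtain ⟨⟨p0, hp0⟩, hAc, hAinv, U, hUo, hAU, hU⟩ := hA
  have hne : ∃ z, IsSolution F z := by
    obtain ⟨z, hz, -⟩ := hAinv p0 hp0
    exact ⟨z, hz⟩
  -- X comes arbitrarily late into any neighbourhood of A
  have hfreq : ∀ ε > 0, ∃ᶠ t in atTop, X t ∈ Metric.thickening ε A := by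
    intro ε hε
    obtain ⟨l, hl, hlx⟩ := mapClusterPt_iff_ultrafilter.1 (aux_cluster.1 hxL)
    obtain ⟨z, hzs, ⟨M, hzM⟩, hz⟩ := aux_limit hF hXcont hXbdd hne hAPT l hl
    have hz0 : z 0 = x := tendsto_nhds_unique (hz 0) (by simpa using hlx)
    have hcpt := isCompact_closedBall (0 : Euc m) M
    obtain ⟨p, -, hp⟩ := @hcpt (map z atTop) _
      (by
        rw [Filter.le_principal_iff]
        exact Filter.mem_map.2 (Eventually.of_forall fun s => mem_closedBall_zero_iff.2 (hzM s)))
    have hpA : p ∈ A := by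
      apply hxB
      have := aux_cluster.2 hp
      simp only [limitSet, omegaLimitSV, mem_iInter] at this ⊢
      intro t ht
      refine closure_mono ?_ (this t ht)
      rintro _ ⟨s, hs, rfl⟩
      exact ⟨s, hs, z, hzs, hz0, rfl⟩
    have hN : Metric.thickening ε A ∈ 𝓝 p :=
      Metric.isOpen_thickening.mem_nhds (Metric.self_subset_thickening hε _ hpA)
    obtain ⟨T, hT⟩ := (mapClusterPt_iff_frequently.1 hp _ hN).exists
    have h1 : ∀ᶠ t in (l : Filter ℝ), X (t + T) ∈ Metric.thickening ε A :=
      (hz T).eventually (Metric.isOpen_thickening.mem_nhds hT)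
    have h2 : ∃ᶠ t in atTop, X (t + T) ∈ Metric.thickening ε A := h1.frequently.filter_mono hl
    rw [frequently_atTop] at h2 ⊢
    intro a
    obtain ⟨b, hb, hb2⟩ := h2 (a - T)
    exact ⟨b + T, by linarith, hb2⟩
  obtain ⟨δ, hδ, hδU⟩ := hAc.exists_thickening_subset_open hUo hAU
  have hmain : ∀ ε > 0, ε ≤ δ / 2 → ∀ᶠ t in atTop, X t ∈ Metric.thickening ε A := by
    intro ε hε hεδ
    obtain ⟨T, hT, hTU⟩ := hU (ε / 2) (by positivity)
    obtain ⟨t0, ht0⟩ := eventually_atTop.1 (aux_window0 hXcont hne hAPT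
      (T := 2 * T) (by positivity) (show 0 < ε / 2 by positivity))
    have hstep : ∀ t ≥ t0, X t ∈ Metric.thickening ε A → ∀ s ∈ Icc T (2 * T),
        X (t + s) ∈ Metric.thickening ε A := by
      intro t ht hXt s hs
      obtain ⟨y, hy, hyu⟩ := ht0 t ht
      have h0 := hyu 0 ⟨le_rfl, by linarith⟩
      rw [add_zero] at h0
      have hs' := hyu s ⟨by linarith [hs.1], hs.2⟩
      have hy0 : y 0 ∈ U := by
        apply hδU
        rw [Metric.mem_thickening_iff] at hXt ⊢
        obtain ⟨q, hq, hqd⟩ := hXt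
        refine ⟨q, hq, ?_⟩
        have := dist_triangle (y 0) (X t) q
        rw [dist_eq_norm (y 0) (X t)] at this
        linarith
      have hys := hTU s hs.1 (y 0) hy0 ⟨y, hy, rfl, rfl⟩
      rw [Metric.mem_thickening_iff] at hys ⊢
      obtain ⟨q, hq, hqd⟩ := hys
      refine ⟨q, hq, ?_⟩
      have := dist_triangle (X (t + s)) (y s) q
      rw [dist_comm (X (t + s)) (y s), dist_eq_norm (y s) (X (t + s))] at this
      linarith
    obtain ⟨t1, ht1, hXt1⟩ := frequently_atTop.1 (hfreq ε hε) t0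
    have hiter : ∀ n : ℕ, X (t1 + n * T) ∈ Metric.thickening ε A := by
      intro n
      induction n with
      | zero => simpa using hXt1
      | succ n ih =>
        have := hstep (t1 + n * T) (by nlinarith [Nat.cast_nonneg (α := ℝ) n]) ih T
          ⟨le_rfl, by linarith⟩
        convert this using 2
        push_cast
        ring
    filter_upwards [eventually_ge_atTop (t1 + T)] with t ht
    have hpos : 0 ≤ (t - t1 - T) / T := div_nonneg (by linarith) hT.le
    have g1 := Nat.floor_le hpos
    have g2 := Nat.lt_floor_add_one ((t - t1 - T) / T)
    set n := ⌊(t - t1 - T) / T⌋₊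
    rw [le_div_iff₀ hT] at g1
    rw [div_lt_iff₀ hT] at g2
    have := hstep (t1 + n * T) (by nlinarith [Nat.cast_nonneg (α := ℝ) n]) (hiter n)
      (t - (t1 + n * T)) ⟨by linarith, by linarith⟩
    simpa using this
  intro q hq
  rw [hAc.isClosed.mem_iff_infDist_zero ⟨p0, hp0⟩]
  refine le_antisymm (le_of_forall_pos_le_add fun ε hε => ?_) infDist_nonneg
  rw [zero_add]
  have hm : 0 < min ε (δ / 2) := by positivity
  have hev := hmain _ hm (min_le_right _ _)
  have hqc : q ∈ Metric.cthickening (min ε (δ / 2)) A := by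
    apply Metric.closure_thickening_subset_cthickening
    rw [mem_closure_iff_nhds]
    intro N hN
    obtain ⟨t, ht1, ht2⟩ := ((mapClusterPt_iff_frequently.1 (aux_cluster.1 hq) N hN).and_eventually
      hev).exists
    exact ⟨X t, ht1, ht2⟩
  exact (ENNReal.toReal_le_of_le_ofReal hm.le (Metric.mem_cthickening_iff.1 hqc)).trans (min_le_left _ _)
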